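/- Let 𝔤 be a finite-dimensional nilpotent Lie algebra over ℝ, X ∈ 𝔤, (𝔤^(i))_{i≥1} the weight filtration associated to X and (𝔤^[a])_{a≥1} the lower central series. The following conditions are equivalent: (a) for every a ≥ 1, 𝔤^[a] = 𝔤^(2a−1); (b) for every a ≥ 1, 𝔤^[a] equals the image of 𝔤 under the (a−1)-fold iterate of the map ad X = ⁅X, ·⁆; (c) for every a ≥ 1, 𝔤^[a+1] = ⁅X, 𝔤^[a]⁆ + 𝔤^[a+2]; (d) for every a ≥ 1, ⁅X, 𝔤^[a]⁆ = 𝔤^[a+1]. Here ⁅X, S⁆ denotes the linear span of {⁅X, y⁆ : y ∈ S}. -/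

import Mathlib

/-!
Write `Cₐ` for the lower central series and `Wᵢ` for the weight filtration. The proof runs
(a) → (c) → (d) → (a) and (b) ↔ (d).

* (b) ↔ (d) holds because `adSpan X S` is the image of `S` under `ad X`.
* (a) → (c): without any hypothesis `W₂ₐ` and `W₂ₐ₊₁` lie in `Cₐ₊₁` (`weightFiltration_le`), so
  `W₂ₐ₊₃ = ⁅𝔤, W₂ₐ₊₂⁆ + ⁅X, W₂ₐ₊₁⁆ ≤ Cₐ₊₃ + ⁅X, Cₐ₊₁⁆`, and under (a) the left side is `Cₐ₊₂`.
* (c) → (d): iterating (c) gives `Cₐ₊₂ ≤ ⁅X, Cₐ₊₁⁆ + Cₐ₊₂₊ₖ` for all `k`, and the last term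
  vanishes for large `k` by nilpotency.
* (d) → (a): under (d) both `W₂ₐ` and `W₂ₐ₊₁` contain `Cₐ₊₁`, by induction on `a`.
-/

variable {L : Type*} [LieRing L] [LieAlgebra ℝ L]

/-- The linear span of all brackets `⁅x, y⁆` with `x ∈ A` and `y ∈ B`. -/
def bracketSpan (A B : Submodule ℝ L) : Submodule ℝ L :=
  Submodule.span ℝ {z : L | ∃ x ∈ A, ∃ y ∈ B, z = ⁅x, y⁆}

/-- The linear span of all brackets `⁅X, y⁆` with `y ∈ S`. -/
def adSpan (X : L) (S : Submodule ℝ L) : Submodule ℝ L :=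
  Submodule.span ℝ {z : L | ∃ y ∈ S, z = ⁅X, y⁆}

/-- The weight filtration of a Lie algebra associated to `X`:
`𝔤⁽⁰⁾ = 𝔤⁽¹⁾ = 𝔤` and `𝔤⁽ⁱ⁺¹⁾ = ⁅𝔤, 𝔤⁽ⁱ⁾⁆ + ⁅X, 𝔤⁽ⁱ⁻¹⁾⁆` for `i ≥ 1`. -/
def weightFiltration (X : L) : ℕ → Submodule ℝ L
  | 0 => ⊤
  | 1 => ⊤
  | (i + 2) =>
      bracketSpan (⊤ : Submodule ℝ L) (weightFiltration X (i + 1)) ⊔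
        adSpan X (weightFiltration X i)

/-- The lower central series: `𝔤^[1] = 𝔤` and `𝔤^[i+1] = ⁅𝔤, 𝔤^[i]⁆`
(`lowerCentral L 0` is a junk value equal to `𝔤`). -/
def lowerCentral (L : Type*) [LieRing L] [LieAlgebra ℝ L] : ℕ → Submodule ℝ L
  | 0 => ⊤
  | 1 => ⊤
  | (i + 2) => bracketSpan (⊤ : Submodule ℝ L) (lowerCentral L (i + 1))

lemma bracketSpan_mono_right {A B C : Submodule ℝ L} (h : B ≤ C) :
    bracketSpan A B ≤ bracketSpan A C := by
  apply Submodule.span_mono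
  rintro z ⟨x, hx, y, hy, rfl⟩
  exact ⟨x, hx, y, h hy, rfl⟩

lemma adSpan_eq_map (X : L) (S : Submodule ℝ L) :
    adSpan X S = S.map (LieAlgebra.ad ℝ L X) := by
  apply le_antisymm
  · apply Submodule.span_le.2
    rintro z ⟨y, hy, rfl⟩
    exact ⟨y, hy, rfl⟩
  · rintro z ⟨y, hy, rfl⟩
    exact Submodule.subset_span ⟨y, hy, rfl⟩

lemma adSpan_mono (X : L) {S T : Submodule ℝ L} (h : S ≤ T) : adSpan X S ≤ adSpan X T := by
  rw [adSpan_eq_map, adSpan_eq_map]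
  exact Submodule.map_mono h

lemma adSpan_le_bracketSpan (X : L) (S : Submodule ℝ L) : adSpan X S ≤ bracketSpan ⊤ S := by
  apply Submodule.span_mono
  rintro z ⟨y, hy, rfl⟩
  exact ⟨X, trivial, y, hy, rfl⟩

lemma lowerCentral_succ_le (n : ℕ) : lowerCentral L (n + 1) ≤ lowerCentral L n := by
  induction n with
  | zero => exact le_top
  | succ n ih =>
    cases n with
    | zero => exact le_top
    | succ n => exact bracketSpan_mono_right ih

lemma lowerCentral_antitone : Antitone (lowerCentral L) :=
  antitone_nat_of_succ_le lowerCentral_succ_le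

lemma adSpan_lowerCentral_le (X : L) (a : ℕ) :
    adSpan X (lowerCentral L (a + 1)) ≤ lowerCentral L (a + 2) :=
  adSpan_le_bracketSpan X _

/-- An inclusion of one odd term of the weight filtration in terms of the lower central series,
given the inclusions for the two preceding terms. The bound is finer than `Cₐ₊₂`, which is what
(a) → (c) uses. -/
lemma weightFiltration_odd_le (X : L) (a : ℕ)
    (h₁ : weightFiltration X (2 * a + 1) ≤ lowerCentral L (a + 1))
    (h₂ : weightFiltration X (2 * a + 2) ≤ lowerCentral L (a + 2)) :
    weightFiltration X (2 * a + 3) ≤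
      adSpan X (lowerCentral L (a + 1)) ⊔ lowerCentral L (a + 3) :=
  sup_le ((bracketSpan_mono_right h₂).trans le_sup_right) ((adSpan_mono X h₁).trans le_sup_left)

lemma weightFiltration_le (X : L) (a : ℕ) :
    weightFiltration X (2 * a) ≤ lowerCentral L (a + 1) ∧
      weightFiltration X (2 * a + 1) ≤ lowerCentral L (a + 1) := by
  induction a with
  | zero => exact ⟨le_top, le_top⟩
  | succ a ih =>
    have h₂ : weightFiltration X (2 * a + 2) ≤ lowerCentral L (a + 2) :=
      sup_le (bracketSpan_mono_right ih.2)
        ((adSpan_mono X ih.1).trans (adSpan_lowerCentral_le X a))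
    exact ⟨h₂, (weightFiltration_odd_le X a ih.2 h₂).trans
      (sup_le (adSpan_lowerCentral_le X a) (lowerCentral_succ_le _))⟩

/-- Under (d) the weight filtration contains the lower central series, with even and odd terms
treated together. -/
lemma le_weightFiltration (X : L)
    (h : ∀ a : ℕ, adSpan X (lowerCentral L (a + 1)) = lowerCentral L (a + 2)) (a : ℕ) :
    lowerCentral L (a + 1) ≤ weightFiltration X (2 * a) ∧
      lowerCentral L (a + 1) ≤ weightFiltration X (2 * a + 1) := by
  induction a with
  | zero => exact ⟨le_top, le_top⟩
  | succ a ih =>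
    exact ⟨(h a).ge.trans ((adSpan_mono X ih.1).trans le_sup_right),
      (h a).ge.trans ((adSpan_mono X ih.2).trans le_sup_right)⟩

/-- Iterating (c): the error term can be pushed arbitrarily far down the lower central series. -/
lemma lowerCentral_le_of_graded (X : L)
    (h : ∀ a : ℕ, lowerCentral L (a + 2) =
      adSpan X (lowerCentral L (a + 1)) ⊔ lowerCentral L (a + 3)) (a k : ℕ) :
    lowerCentral L (a + 2) ≤ adSpan X (lowerCentral L (a + 1)) ⊔ lowerCentral L (a + k + 2) := by
  induction k with
  | zero => exact le_sup_right
  | succ k ih =>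
    refine ih.trans (sup_le le_sup_left ((h (a + k)).le.trans (sup_le_sup_right ?_ _)))
    exact adSpan_mono X (lowerCentral_antitone (by omega))

/-- Characterization of the Gaussian case: the four conditions (a)–(d) are equivalent.
Indices are shifted so that `a + 1` ranges over all integers `≥ 1`. -/
theorem gaussian_characterization (X : L) [FiniteDimensional ℝ L]
    (hnil : ∃ s : ℕ, lowerCentral L s = ⊥) :
    List.TFAE
      [∀ a : ℕ, lowerCentral L (a + 1) = weightFiltration X (2 * a + 1),
       ∀ a : ℕ, lowerCentral L (a + 1) = Submodule.map ((LieAlgebra.ad ℝ L X) ^ a) ⊤,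
       ∀ a : ℕ, lowerCentral L (a + 2) =
          adSpan X (lowerCentral L (a + 1)) ⊔ lowerCentral L (a + 3),
       ∀ a : ℕ, adSpan X (lowerCentral L (a + 1)) = lowerCentral L (a + 2)] := by
  tfae_have 1 → 3 := by
    intro h a
    refine le_antisymm ((h (a + 1)).le.trans ?_)
      (sup_le (adSpan_lowerCentral_le X a) (lowerCentral_succ_le _))
    exact weightFiltration_odd_le X a (weightFiltration_le X a).2 (weightFiltration_le X (a + 1)).1
  tfae_have 3 → 4 := by
    intro h a
    obtain ⟨s, hs⟩ := hnil
    refine le_antisymm (adSpan_lowerCentral_le X a)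
      ((lowerCentral_le_of_graded X h a s).trans (sup_le le_rfl ?_))
    exact (lowerCentral_antitone (by omega : s ≤ a + s + 2)).trans (hs.le.trans bot_le)
  tfae_have 4 → 1 := fun h a =>
    le_antisymm (le_weightFiltration X h a).2 (weightFiltration_le X a).2
  tfae_have 2 → 4 := by
    intro h a
    rw [h a, h (a + 1), adSpan_eq_map, pow_succ', Module.End.mul_eq_comp, Submodule.map_comp]
  tfae_have 4 → 2 := by
    intro h a
    induction a with
    | zero => simp [lowerCentral, Module.End.one_eq_id]
    | succ a ih =>
      rw [pow_succ', Module.End.mul_eq_comp, Submodule.map_comp, ← ih, ← adSpan_eq_map, h a]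
  tfae_finish
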